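/- arXiv:2006.07138 — 3 statements merged into one kernel-verified Lean document; each statement's English description precedes it below -/
import Mathlib

section
/- Let n ≥ 1, M' ≥ 1, s ∈ (0,1), K > 0 and ε > 0. There exists λ = λ(n,s,K,ε) > 1 with the following property: for every t ≥ s, every measurable map u : ℝⁿ → ℝ^{M'} with |u(x)| ≤ K for almost every x, every x₀ ∈ ℝⁿ and every r ∈ (0,1], if ∫_{B(x₀, λ r^{s/t})} ∫_{B(x₀, λ r^{s/t})} |u(x)−u(y)|^{n/s}/|x−y|^{n+t·n/s} dx dy < ε/2, then ∫_{B(x₀,r)} ∫_{ℝⁿ} |u(x)−u(y)|^{n/s}/|x−y|^{n+t·n/s} dx dy < ε. -/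
open MeasureTheory
open scoped ENNReal

noncomputable section

/-- Euclidean space `ℝᵏ`. -/
abbrev Euc (k : ℕ) : Type _ := EuclideanSpace ℝ (Fin k)

/-- Kernel `|u(x)-u(y)|^{n/s} / |x-y|^{n+t·n/s}` in `[0,∞]`. -/
def ker (n M : ℕ) (s t : ℝ) (u : Euc n → Euc M) (x y : Euc n) : ℝ≥0∞ :=
  ENNReal.ofReal (‖u x - u y‖ ^ ((n : ℝ) / s) / ‖x - y‖ ^ ((n : ℝ) + t * ((n : ℝ) / s)))

open MeasureTheory in
/-- Scaling of the reference tail integral. -/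
theorem tail_scale (n : ℕ) (x₀ : Euc n) (R : ℝ) (hR : 0 < R) :
    (∫⁻ y : Euc n, ENNReal.ofReal ((1 + ‖y - x₀‖ / R) ^ (-(2 * (n : ℝ)))))
      = ENNReal.ofReal (R ^ n) *
        ∫⁻ y : Euc n, ENNReal.ofReal ((1 + ‖y‖) ^ (-(2 * (n : ℝ)))) := by
  have h1 : (∫⁻ y : Euc n, ENNReal.ofReal ((1 + ‖y - x₀‖ / R) ^ (-(2 * (n : ℝ)))))
      = ∫⁻ y : Euc n, ENNReal.ofReal ((1 + ‖y‖ / R) ^ (-(2 * (n : ℝ)))) :=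
    lintegral_sub_right_eq_self
      (fun y : Euc n => ENNReal.ofReal ((1 + ‖y‖ / R) ^ (-(2 * (n : ℝ))))) x₀
  rw [h1]
  have hm : Measurable (fun y : Euc n => ENNReal.ofReal ((1 + ‖y‖) ^ (-(2 * (n : ℝ))))) := by
    fun_prop
  have h2 := lintegral_map (μ := (volume : Measure (Euc n))) hm
    (measurable_const_smul (R⁻¹))
  rw [Measure.map_addHaar_smul _ (inv_ne_zero hR.ne')] at h2
  rw [lintegral_smul_measure] at h2
  simp only [finrank_euclideanSpace, Fintype.card_fin, norm_smul, norm_inv, Real.norm_eq_abs,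
    abs_of_pos hR] at h2
  have h3 : |((R⁻¹) ^ n)⁻¹| = R ^ n := by
    rw [inv_pow, inv_inv, abs_of_pos (by positivity)]
  rw [h3] at h2
  rw [smul_eq_mul] at h2
  rw [h2]
  congr 1
  ext y
  rw [div_eq_inv_mul]

/-- Finiteness of the reference tail integral. -/
theorem tail_finite (n : ℕ) (hn : 1 ≤ n) :
    (∫⁻ y : Euc n, ENNReal.ofReal ((1 + ‖y‖) ^ (-(2 * (n : ℝ))))) < ⊤ := by
  apply finite_integral_one_add_norm
  rw [finrank_euclideanSpace, Fintype.card_fin]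
  have : (1 : ℝ) ≤ n := by exact_mod_cast hn
  linarith

/-- Pointwise real bound. -/
theorem ptwise (N p A a d e R : ℝ) (hN : 1 ≤ N) (hp : N ≤ p) (hR : 0 < R)
    (hd : R ≤ d) (he : d / 2 ≤ e) (haA : a ≤ A) (hA : 0 ≤ A) :
    a / e ^ (N + p) ≤ (A * (2 / R) ^ (N + p) * 2 ^ (2 * N)) * (1 + d / R) ^ (-(2 * N)) := by
  have hd0 : 0 < d := by linarith
  have he0 : 0 < e := by linarith
  have e1 : a / e ^ (N + p) ≤ A / (d / 2) ^ (N + p) := by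
    have : (d / 2) ^ (N + p) ≤ e ^ (N + p) :=
      Real.rpow_le_rpow (by linarith) he (by linarith)
    have h0 : 0 < (d / 2) ^ (N + p) := Real.rpow_pos_of_pos (by linarith) _
    gcongr
  refine e1.trans ?_
  have e2 : A / (d / 2) ^ (N + p) = A * (2 / R) ^ (N + p) * (R / d) ^ (N + p) := by
    rw [mul_assoc, ← Real.mul_rpow (by positivity) (by positivity), div_eq_mul_inv,
      ← Real.inv_rpow (by positivity)]
    congr 2
    field_simp
  rw [e2, mul_assoc (A * (2 / R) ^ (N + p))]
  have h0 : 0 ≤ A * (2 / R) ^ (N + p) := by positivity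
  refine mul_le_mul_of_nonneg_left ?_ h0
  have hq : R / d ≤ 1 := by rw [div_le_one hd0]; exact hd
  calc (R / d) ^ (N + p) ≤ (R / d) ^ (2 * N) :=
        Real.rpow_le_rpow_of_exponent_ge (by positivity) hq (by linarith)
    _ ≤ (2 / (1 + d / R)) ^ (2 * N) := by
        refine Real.rpow_le_rpow (by positivity) ?_ (by linarith)
        have : 1 + d / R = (R + d) / R := by field_simp
        rw [this, div_div_eq_mul_div, div_le_div_iff₀ hd0 (by linarith)]
        nlinarith
    _ = _ := by
        rw [Real.div_rpow (by norm_num) (by positivity), Real.rpow_neg (by positivity),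
          div_eq_mul_inv]

/-- Cancellation of the powers of `r`. -/
theorem scale_calc (n : ℕ) (hn : 1 ≤ n) (s t r lam : ℝ) (hs : 0 < s) (ht : s ≤ t)
    (hr : 0 < r) (hl : 2 ≤ lam) :
    (2 / (lam * r ^ (s / t))) ^ ((n : ℝ) + t * ((n : ℝ) / s)) * (lam * r ^ (s / t)) ^ n * r ^ n
      ≤ 2 ^ n * (2 / lam) := by
  have hn' : (1 : ℝ) ≤ n := by exact_mod_cast hn
  have ht0 : 0 < t := by linarith
  have hl0 : 0 < lam := by linarith
  have hrp : 0 < r ^ (s / t) := Real.rpow_pos_of_pos hr _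
  have hp : 1 ≤ t * ((n : ℝ) / s) := by
    have : (n : ℝ) ≤ t * ((n : ℝ) / s) := by
      rw [mul_div_assoc', le_div_iff₀ hs]; nlinarith
    linarith
  have hc : (r ^ (s / t)) ^ (t * ((n : ℝ) / s)) = r ^ n := by
    rw [← Real.rpow_mul hr.le, ← Real.rpow_natCast]
    congr 1
    field_simp
  have h1 : (2 / (lam * r ^ (s / t))) ^ (t * ((n : ℝ) / s)) * r ^ n
      = (2 / lam) ^ (t * ((n : ℝ) / s)) := by
    rw [← div_div, Real.div_rpow (by positivity) hrp.le, hc]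
    field_simp
  rw [Real.rpow_add (by positivity), Real.rpow_natCast]
  have h2 : (2 / (lam * r ^ (s / t))) ^ n * (lam * r ^ (s / t)) ^ n = 2 ^ n := by
    rw [← mul_pow]; congr 1; field_simp
  calc _ = ((2 / (lam * r ^ (s / t))) ^ n * (lam * r ^ (s / t)) ^ n) *
        ((2 / (lam * r ^ (s / t))) ^ (t * ((n : ℝ) / s)) * r ^ n) := by ring
    _ = 2 ^ n * (2 / lam) ^ (t * ((n : ℝ) / s)) := by rw [h1, h2]
    _ ≤ 2 ^ n * (2 / lam) := by
        refine mul_le_mul_of_nonneg_left ?_ (by positivity)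
        have := Real.rpow_le_rpow_of_exponent_ge (x := 2 / lam) (by positivity)
          (by rw [div_le_one hl0]; exact hl) hp
        rwa [Real.rpow_one] at this

/-- smallness of the energy on a (suitably enlarged) ball implies smallness of
the full tail energy of the ball. -/
theorem stmt6 (n M : ℕ) (hn : 1 ≤ n) (hM : 1 ≤ M) (s K ε : ℝ)
    (hs : 0 < s) (hs1 : s < 1) (hK : 0 < K) (hε : 0 < ε) :
    ∃ lam : ℝ, 1 < lam ∧
      ∀ t : ℝ, s ≤ t →
      ∀ u : Euc n → Euc M, Measurable u → (∀ᵐ x, ‖u x‖ ≤ K) →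
      ∀ (x₀ : Euc n) (r : ℝ), 0 < r → r ≤ 1 →
        (∫⁻ x in Metric.ball x₀ (lam * r ^ (s / t)),
            ∫⁻ y in Metric.ball x₀ (lam * r ^ (s / t)), ker n M s t u x y)
          < ENNReal.ofReal (ε / 2) →
        (∫⁻ x in Metric.ball x₀ r, ∫⁻ y, ker n M s t u x y) < ENNReal.ofReal ε := by
  have hn' : (1 : ℝ) ≤ n := by exact_mod_cast hn
  set I : ℝ≥0∞ := ∫⁻ y : Euc n, ENNReal.ofReal ((1 + ‖y‖) ^ (-(2 * (n : ℝ)))) with hI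
  have hIf : I ≠ ⊤ := (tail_finite n hn).ne
  set W : ℝ≥0∞ := volume (Metric.ball (0 : Euc n) 1) with hW
  have hWf : W ≠ ⊤ := measure_ball_lt_top.ne
  set A : ℝ := (2 * K) ^ ((n : ℝ) / s) with hA
  have hA0 : 0 ≤ A := by positivity
  set D : ℝ := A * 2 ^ (2 * (n : ℝ)) * I.toReal * W.toReal * 2 ^ n with hD
  have hD0 : 0 ≤ D := by positivity
  refine ⟨2 + 4 * D / ε, by have : 0 ≤ 4 * D / ε := by positivity
                            linarith, ?_⟩
  set lam : ℝ := 2 + 4 * D / ε with hlam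
  have hl : 2 ≤ lam := by have : 0 ≤ 4 * D / ε := by positivity
                          linarith
  have hDl : D * (2 / lam) ≤ ε / 2 := by
    have h : lam * ε = 2 * ε + 4 * D := by rw [hlam]; field_simp
    rw [mul_div_assoc', div_le_div_iff₀ (by linarith) (by norm_num)]
    nlinarith
  intro t ht u hu huK x₀ r hr hr1 hE
  have ht0 : 0 < t := by linarith
  have hrr : r ≤ r ^ (s / t) := by
    have := Real.rpow_le_rpow_of_exponent_ge hr hr1 (show s / t ≤ 1 from by
      rw [div_le_one ht0]; exact ht)
    rwa [Real.rpow_one] at this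
  have hsc := scale_calc n hn s t r lam hs ht hr hl
  set R : ℝ := lam * r ^ (s / t) with hR
  have hR2 : 2 * r ≤ R := by
    rw [hR]; exact mul_le_mul hl hrr hr.le (by linarith)
  have hR0 : 0 < R := by linarith
  have hp : (n : ℝ) ≤ t * ((n : ℝ) / s) := by
    rw [mul_div_assoc', le_div_iff₀ hs]; nlinarith
  set B : ℝ := A * (2 / R) ^ ((n : ℝ) + t * ((n : ℝ) / s)) * 2 ^ (2 * (n : ℝ)) with hB
  have hB0 : 0 ≤ B := by positivity
  set T : ℝ≥0∞ := ENNReal.ofReal B * (ENNReal.ofReal (R ^ n) * I) with hT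
  have key : ∀ᵐ x ∂(volume.restrict (Metric.ball x₀ r)),
      (∫⁻ y, ker n M s t u x y) ≤ (∫⁻ y in Metric.ball x₀ R, ker n M s t u x y) + T := by
    filter_upwards [ae_restrict_of_ae huK, ae_restrict_mem Metric.isOpen_ball.measurableSet]
      with x hx hxr
    rw [← lintegral_add_compl _ (Metric.isOpen_ball (x := x₀) (ε := R)).measurableSet]
    gcongr
    calc (∫⁻ y in (Metric.ball x₀ R)ᶜ, ker n M s t u x y)
        ≤ ∫⁻ y in (Metric.ball x₀ R)ᶜ, ENNReal.ofReal B *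
            ENNReal.ofReal ((1 + ‖y - x₀‖ / R) ^ (-(2 * (n : ℝ)))) := by
          refine lintegral_mono_ae ?_
          filter_upwards [ae_restrict_of_ae huK,
            ae_restrict_mem (Metric.isOpen_ball (x := x₀) (ε := R)).measurableSet.compl]
            with y hy hyR
          rw [← ENNReal.ofReal_mul hB0]
          refine ENNReal.ofReal_le_ofReal ?_
          have hyR' : R ≤ ‖y - x₀‖ := by
            simpa [Metric.mem_ball, dist_eq_norm] using hyR
          have hxr' : ‖x - x₀‖ < r := by
            simpa [Metric.mem_ball, dist_eq_norm] using hxr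
          refine ptwise n _ A _ _ _ R hn' hp hR0 hyR' ?_ ?_ hA0
          · have h := norm_sub_le (x - x₀) (x - y)
            have h' : (x - x₀) - (x - y) = y - x₀ := by abel
            rw [h'] at h
            linarith
          · refine Real.rpow_le_rpow (norm_nonneg _) ?_ (by positivity)
            have h := norm_sub_le (u x) (u y)
            linarith
      _ ≤ ∫⁻ y, ENNReal.ofReal B *
            ENNReal.ofReal ((1 + ‖y - x₀‖ / R) ^ (-(2 * (n : ℝ)))) :=
          setLIntegral_le_lintegral _ _
      _ = T := by
          rw [lintegral_const_mul' _ _ ENNReal.ofReal_ne_top, tail_scale n x₀ R hR0]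
  have hTW : T * volume (Metric.ball x₀ r) ≤ ENNReal.ofReal (ε / 2) := by
    rw [Measure.addHaar_ball_of_pos _ _ hr, finrank_euclideanSpace, Fintype.card_fin, ← hW, hT,
      ← ENNReal.ofReal_toReal hIf, ← ENNReal.ofReal_toReal hWf,
      ← ENNReal.ofReal_mul (by positivity), ← ENNReal.ofReal_mul hB0,
      ← ENNReal.ofReal_mul (by positivity), ← ENNReal.ofReal_mul (by positivity)]
    refine ENNReal.ofReal_le_ofReal (le_trans ?_ hDl)
    calc _ = (A * 2 ^ (2 * (n : ℝ)) * I.toReal * W.toReal) *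
          ((2 / R) ^ ((n : ℝ) + t * ((n : ℝ) / s)) * R ^ n * r ^ n) := by rw [hB]; ring
      _ ≤ (A * 2 ^ (2 * (n : ℝ)) * I.toReal * W.toReal) * (2 ^ n * (2 / lam)) :=
          mul_le_mul_of_nonneg_left hsc (by positivity)
      _ = _ := by rw [hD]; ring
  calc (∫⁻ x in Metric.ball x₀ r, ∫⁻ y, ker n M s t u x y)
      ≤ ∫⁻ x in Metric.ball x₀ r, ((∫⁻ y in Metric.ball x₀ R, ker n M s t u x y) + T) :=
        lintegral_mono_ae key
    _ = (∫⁻ x in Metric.ball x₀ r, ∫⁻ y in Metric.ball x₀ R, ker n M s t u x y)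
          + T * volume (Metric.ball x₀ r) := by
        rw [lintegral_add_right _ measurable_const, setLIntegral_const]
    _ ≤ (∫⁻ x in Metric.ball x₀ R, ∫⁻ y in Metric.ball x₀ R, ker n M s t u x y)
          + ENNReal.ofReal (ε / 2) := by
        refine add_le_add (lintegral_mono_set (Metric.ball_subset_ball (by linarith))) hTW
    _ < ENNReal.ofReal (ε / 2) + ENNReal.ofReal (ε / 2) :=
        ENNReal.add_lt_add_right ENNReal.ofReal_ne_top hE
    _ = ENNReal.ofReal ε := by
        rw [← ENNReal.ofReal_add (by linarith) (by linarith)]; congr 1; ring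
end
end

section
/- Let n ≥ 1, M' ≥ 1 and s ∈ (0,1). There exists a constant C = C(n,s) > 0 such that for every t ∈ [s, 2s], every σ > 0, every λ ≥ 2, every K > 0, every measurable map u : ℝⁿ → ℝ^{M'} with |u(x)| ≤ K for almost every x, every x₀ ∈ ℝⁿ and every r ∈ (0,1], setting θ := t/s + σ/n (so θ > 1), one has ∫_{ℝⁿ∖B(x₀,r)} ∫_{ℝⁿ} |u(x)−u(y)|^{n/s}/|x−y|^{n+t·n/s} dx dy ≤ ∫_{ℝⁿ∖B(x₀, λ^{−1} r^{θ})} ∫_{ℝⁿ∖B(x₀, λ^{−1} r^{θ})} |u(x)−u(y)|^{n/s}/|x−y|^{n+t·n/s} dx dy + C · K^{n/s} · λ^{−n} · r^{σ}. -/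
open MeasureTheory
open scoped ENNReal

noncomputable section

lemma aux_kernel (n : ℕ) (p K r a z d w : ℝ) (hp : 0 ≤ p) (hr : 0 < r)
    (ha : 2 * (n : ℝ) ≤ a) (ha2 : a ≤ 3 * n) (hz : 1 ≤ z) (hd : r * z / 2 ≤ d)
    (hw0 : 0 ≤ w) (hw : w ≤ 2 * K) :
    w ^ p / d ^ a ≤ (2 * K) ^ p * r ^ (-a) * 4 ^ (3 * (n : ℝ)) * (1 + z) ^ (-(2 * (n : ℝ))) := by
  have hn0 : (0 : ℝ) ≤ n := Nat.cast_nonneg n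
  have h1 : r * (1 + z) / 4 ≤ d := by nlinarith
  have hpos : 0 < r * (1 + z) / 4 := by positivity
  have h2 : d ^ (-a) ≤ (r * (1 + z) / 4) ^ (-a) :=
    Real.rpow_le_rpow_of_nonpos hpos h1 (by linarith)
  have h3 : (r * (1 + z) / 4) ^ (-a) = r ^ (-a) * 4 ^ a * (1 + z) ^ (-a) := by
    rw [Real.div_rpow (by positivity) (by norm_num), Real.mul_rpow hr.le (by positivity),
      Real.rpow_neg (by norm_num : (0 : ℝ) ≤ 4), div_inv_eq_mul]
    ring
  have h4 : (4 : ℝ) ^ a ≤ 4 ^ (3 * (n : ℝ)) :=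
    Real.rpow_le_rpow_of_exponent_le (by norm_num) ha2
  have h5 : (1 + z) ^ (-a) ≤ (1 + z) ^ (-(2 * (n : ℝ))) :=
    Real.rpow_le_rpow_of_exponent_le (by linarith) (by linarith)
  have h6 : w ^ p ≤ (2 * K) ^ p := Real.rpow_le_rpow hw0 hw hp
  have hd0 : 0 < d := by linarith
  rw [div_eq_mul_inv, ← Real.rpow_neg hd0.le]
  have hK : 0 ≤ 2 * K := hw0.trans hw
  calc w ^ p * d ^ (-a) ≤ (2 * K) ^ p * (r ^ (-a) * 4 ^ (3 * (n : ℝ)) * (1 + z) ^ (-(2 * (n : ℝ)))) := by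
        refine mul_le_mul h6 (h2.trans ?_) (by positivity) (by positivity)
        rw [h3]
        gcongr
    _ = _ := by ring

lemma aux_integral (n : ℕ) (hn : 1 ≤ n) (A r : ℝ) (hA : 0 ≤ A) (hr : 0 < r) (x₀ : Euc n) :
    ∫⁻ x : Euc n, ENNReal.ofReal (A * (1 + ‖r⁻¹ • (x - x₀)‖) ^ (-(2 * (n : ℝ))))
      = ENNReal.ofReal (A * (r ^ (n : ℝ) * ∫ x : Euc n, (1 + ‖x‖) ^ (-(2 * (n : ℝ))))) := by
  have hI : Integrable (fun x : Euc n => (1 + ‖x‖) ^ (-(2 * (n : ℝ)))) := by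
    apply integrable_one_add_norm
    have : (1 : ℝ) ≤ n := by exact_mod_cast hn
    simp only [finrank_euclideanSpace, Fintype.card_fin]
    linarith
  have hI2 : Integrable (fun x : Euc n => A * (1 + ‖r⁻¹ • (x - x₀)‖) ^ (-(2 * (n : ℝ)))) :=
    ((hI.comp_smul (inv_ne_zero hr.ne')).comp_sub_right x₀).const_mul A
  rw [← ofReal_integral_eq_lintegral_ofReal hI2 (Filter.Eventually.of_forall fun x => by positivity),
    integral_const_mul,
    integral_sub_right_eq_self (fun x : Euc n => (1 + ‖r⁻¹ • x‖) ^ (-(2 * (n : ℝ)))) x₀,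
    Measure.integral_comp_inv_smul volume (fun x : Euc n => (1 + ‖x‖) ^ (-(2 * (n : ℝ)))) r]
  simp [abs_of_pos hr]

/-- the tail energy of the complement of a ball is controlled by the energy of
the complement of a much smaller ball, up to an explicit error term. -/
theorem stmt7 (n M : ℕ) (hn : 1 ≤ n) (hM : 1 ≤ M) (s : ℝ) (hs : 0 < s) (hs1 : s < 1) :
    ∃ C : ℝ, 0 < C ∧
      ∀ t : ℝ, s ≤ t → t ≤ 2 * s →
      ∀ σ : ℝ, 0 < σ →
      ∀ lam : ℝ, 2 ≤ lam →
      ∀ K : ℝ, 0 < K →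
      ∀ u : Euc n → Euc M, Measurable u → (∀ᵐ x, ‖u x‖ ≤ K) →
      ∀ (x₀ : Euc n) (r : ℝ), 0 < r → r ≤ 1 →
        (∫⁻ x in (Metric.ball x₀ r)ᶜ, ∫⁻ y, ker n M s t u x y)
          ≤ (∫⁻ x in (Metric.ball x₀ (lam⁻¹ * r ^ (t / s + σ / n)))ᶜ,
              ∫⁻ y in (Metric.ball x₀ (lam⁻¹ * r ^ (t / s + σ / n)))ᶜ, ker n M s t u x y)
            + ENNReal.ofReal (C * K ^ ((n : ℝ) / s) * lam ^ (-(n : ℝ)) * r ^ σ) := by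
  set I : ℝ := ∫ x : Euc n, (1 + ‖x‖) ^ (-(2 * (n : ℝ))) with hIdef
  have hI0 : 0 ≤ I := integral_nonneg fun x => by positivity
  set V : ℝ := (volume (Metric.ball (0 : Euc n) 1)).toReal with hV
  have hV0 : 0 ≤ V := ENNReal.toReal_nonneg
  have hn1 : (1 : ℝ) ≤ n := by exact_mod_cast hn
  refine ⟨2 ^ ((n : ℝ) / s) * 4 ^ (3 * (n : ℝ)) * (I * V + 1), by positivity, ?_⟩
  intro t hst ht2 σ hσ lam hlam K hK u hu huK x₀ r hr hr1
  set θ : ℝ := t / s + σ / n with hθ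
  set ρ : ℝ := lam⁻¹ * r ^ θ with hρ
  have hlam0 : 0 < lam := by linarith
  have hρ0 : 0 < ρ := by positivity
  have hts : 1 ≤ t / s := by rwa [le_div_iff₀ hs, one_mul]
  have hts2 : t / s ≤ 2 := by rwa [div_le_iff₀ hs]
  have hθ1 : 1 ≤ θ := by
    have : 0 < σ / n := by positivity
    linarith
  have hρr : ρ ≤ r / 2 := by
    have h1 : r ^ θ ≤ r := by
      simpa using Real.rpow_le_rpow_of_exponent_ge hr hr1 hθ1
    have h2 : lam⁻¹ ≤ 2⁻¹ := inv_anti₀ (by norm_num) hlam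
    calc ρ ≤ 2⁻¹ * r := mul_le_mul h2 h1 (by positivity) (by norm_num)
      _ = r / 2 := by ring
  set p : ℝ := (n : ℝ) / s with hp
  have hp0 : 0 ≤ p := by positivity
  set a : ℝ := (n : ℝ) + t * p with hadef
  have htp : t * p = n * (t / s) := by rw [hp]; ring
  have ha : 2 * (n : ℝ) ≤ a := by rw [hadef, htp]; nlinarith
  have ha2 : a ≤ 3 * (n : ℝ) := by rw [hadef, htp]; nlinarith
  set A : ℝ := (2 * K) ^ p * r ^ (-a) * 4 ^ (3 * (n : ℝ)) with hA
  have hA0 : 0 ≤ A := by positivity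
  set B : ℝ := ρ ^ n * V with hB
  have hB0 : 0 ≤ B := by positivity
  have hvol : volume (Metric.ball x₀ ρ) = ENNReal.ofReal B := by
    rw [Measure.addHaar_ball_of_pos volume x₀ hρ0, hB, ENNReal.ofReal_mul (by positivity), hV,
      ENNReal.ofReal_toReal measure_ball_lt_top.ne]
    simp
  have hinner : ∀ᵐ x : Euc n, x ∈ (Metric.ball x₀ r)ᶜ →
      (∫⁻ y, ker n M s t u x y) ≤ (∫⁻ y in (Metric.ball x₀ ρ)ᶜ, ker n M s t u x y)
        + ENNReal.ofReal (A * B * (1 + ‖r⁻¹ • (x - x₀)‖) ^ (-(2 * (n : ℝ)))) := by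
    filter_upwards [huK] with x hx hxr
    rw [← lintegral_add_compl _ (measurableSet_ball : MeasurableSet (Metric.ball x₀ ρ)), add_comm]
    gcongr
    have hxr' : r ≤ ‖x - x₀‖ := by
      simpa [dist_eq_norm] using hxr
    set z : ℝ := ‖r⁻¹ • (x - x₀)‖ with hz
    have hz' : r * z = ‖x - x₀‖ := by
      rw [hz, norm_smul, Real.norm_of_nonneg (by positivity), mul_inv_cancel_left₀ hr.ne']
    have hz1 : 1 ≤ z := by
      by_contra h
      push Not at h
      nlinarith
    calc (∫⁻ y in Metric.ball x₀ ρ, ker n M s t u x y)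
        ≤ ∫⁻ y in Metric.ball x₀ ρ, ENNReal.ofReal (A * (1 + z) ^ (-(2 * (n : ℝ)))) := by
          apply lintegral_mono_ae
          filter_upwards [ae_restrict_mem measurableSet_ball, ae_restrict_of_ae huK] with y hy hyK
          unfold ker
          apply ENNReal.ofReal_le_ofReal
          have hy' : ‖y - x₀‖ < ρ := by simpa [dist_eq_norm] using hy
          have htri : ‖x - x₀‖ ≤ ‖x - y‖ + ‖y - x₀‖ := norm_sub_le_norm_sub_add_norm_sub x y x₀
          refine aux_kernel n p K r a z _ _ hp0 hr ha ha2 hz1 ?_ (norm_nonneg _) ?_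
          · rw [hz']; linarith
          · linarith [norm_sub_le (u x) (u y)]
      _ = ENNReal.ofReal (A * B * (1 + z) ^ (-(2 * (n : ℝ)))) := by
          rw [setLIntegral_const, hvol, ← ENNReal.ofReal_mul (by positivity)]
          congr 1
          ring
  have hmeas : Measurable fun x : Euc n =>
      ENNReal.ofReal (A * B * (1 + ‖r⁻¹ • (x - x₀)‖) ^ (-(2 * (n : ℝ)))) := by
    fun_prop
  calc (∫⁻ x in (Metric.ball x₀ r)ᶜ, ∫⁻ y, ker n M s t u x y)
      ≤ ∫⁻ x in (Metric.ball x₀ r)ᶜ, ((∫⁻ y in (Metric.ball x₀ ρ)ᶜ, ker n M s t u x y)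
        + ENNReal.ofReal (A * B * (1 + ‖r⁻¹ • (x - x₀)‖) ^ (-(2 * (n : ℝ))))) := by
        apply lintegral_mono_ae
        exact (ae_restrict_iff' measurableSet_ball.compl).2 hinner
    _ = (∫⁻ x in (Metric.ball x₀ r)ᶜ, ∫⁻ y in (Metric.ball x₀ ρ)ᶜ, ker n M s t u x y)
        + ∫⁻ x in (Metric.ball x₀ r)ᶜ,
          ENNReal.ofReal (A * B * (1 + ‖r⁻¹ • (x - x₀)‖) ^ (-(2 * (n : ℝ)))) :=
        lintegral_add_right _ hmeas
    _ ≤ _ := by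
        refine add_le_add ?_ ?_
        · apply lintegral_mono_set
          apply Set.compl_subset_compl.2
          exact Metric.ball_subset_ball (by linarith)
        · refine (setLIntegral_le_lintegral _ _).trans ?_
          rw [aux_integral n hn (A * B) r (by positivity) hr x₀]
          apply ENNReal.ofReal_le_ofReal
          rw [← hIdef]
          have hpow : r ^ (-a) * ρ ^ n * r ^ (n : ℝ) = lam ^ (-(n : ℝ)) * r ^ σ := by
            have e1 : ρ ^ n = lam ^ (-(n : ℝ)) * r ^ (θ * n) := by
              rw [hρ, mul_pow, Real.rpow_neg hlam0.le, Real.rpow_natCast, inv_pow,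
                Real.rpow_mul hr.le, Real.rpow_natCast]
            have e2 : σ = -a + θ * n + n := by
              rw [hadef, htp, hθ]
              field_simp
              ring
            rw [e1]
            conv_rhs => rw [e2, Real.rpow_add hr, Real.rpow_add hr]
            ring
          have hKp : (2 * K) ^ p = 2 ^ p * K ^ p := Real.mul_rpow (by norm_num) hK.le
          calc A * B * (r ^ (n : ℝ) * I)
              = 2 ^ p * 4 ^ (3 * (n : ℝ)) * (I * V) * K ^ p
                  * (r ^ (-a) * ρ ^ n * r ^ (n : ℝ)) := by
                rw [hA, hB, hKp]; ring
            _ = 2 ^ p * 4 ^ (3 * (n : ℝ)) * (I * V) * K ^ p * lam ^ (-(n : ℝ)) * r ^ σ := by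
                rw [hpow]; ring
            _ ≤ 2 ^ p * 4 ^ (3 * (n : ℝ)) * (I * V + 1) * K ^ p * lam ^ (-(n : ℝ)) * r ^ σ := by
                gcongr
                linarith
end
end

section
/- Let n ≥ 1, m ≥ 1 and s ∈ (0,1). There exists ε = ε(n,m,s) > 0 such that every continuous map u : 𝕊ⁿ → 𝕊^m satisfying E_{s,n/s}(u) = ∫_{𝕊ⁿ}∫_{𝕊ⁿ} |u(x)−u(y)|^{n/s}/|x−y|^{2n} dμ(x) dμ(y) < ε is homotopic to a constant map. -/
open MeasureTheory
open scoped ENNReal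

noncomputable section

/-- The unit sphere `𝕊ᵏ ⊆ ℝ^{k+1}`. -/
abbrev Sph (k : ℕ) : Type _ := ↥(Metric.sphere (0 : EuclideanSpace ℝ (Fin (k + 1))) 1)

/-- `f` and `g` are homotopic maps. -/
def Homotopic {X Y : Type*} [TopologicalSpace X] [TopologicalSpace Y] (f g : X → Y) : Prop :=
  ∃ H : unitInterval × X → Y, Continuous H ∧ (∀ x, H (0, x) = f x) ∧ (∀ x, H (1, x) = g x)

/-- The energy `E_{s,n/s}(u) = ∫∫ |u(x)-u(y)|^{n/s}/|x-y|^{2n} dμ dμ` of a map `𝕊ⁿ → 𝕊^m`,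
with `μ` the `n`-dimensional Hausdorff measure on `𝕊ⁿ`. -/
def sphEnergy (n m : ℕ) (s : ℝ) (u : Sph n → Sph m) : ℝ≥0∞ :=
  ∫⁻ x, ∫⁻ y,
    ENNReal.ofReal
      (‖(u x : EuclideanSpace ℝ (Fin (m + 1))) - (u y : EuclideanSpace ℝ (Fin (m + 1)))‖
          ^ ((n : ℝ) / s) / dist x y ^ (2 * (n : ℝ)))
    ∂(μH[(n : ℝ)] : Measure (Sph n)) ∂(μH[(n : ℝ)] : Measure (Sph n))

theorem haar_aux (n : ℕ) : (μH[(n : ℝ)] : Measure (EuclideanSpace ℝ (Fin n))).IsAddHaarMeasure :=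
  inferInstance

theorem sph_locfin (n : ℕ) : IsLocallyFiniteMeasure (μH[(n : ℝ)] : Measure (Sph n)) := by
  have : Fact (Module.finrank ℝ (EuclideanSpace ℝ (Fin (n + 1))) = n + 1) := ⟨by simp⟩
  have := haar_aux n
  refine ⟨fun x => ?_⟩
  have hv : ‖((-x : Sph n) : EuclideanSpace ℝ (Fin (n+1)))‖ = 1 := norm_eq_of_mem_sphere (-x)
  let b := OrthonormalBasis.fromOrthogonalSpanSingleton (𝕜 := ℝ) n (ne_zero_of_mem_unit_sphere (-x))
  let g : EuclideanSpace ℝ (Fin n) → Sph n := fun w => stereoInvFun hv (b.repr.symm w)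
  have hg : Topology.IsOpenEmbedding g :=
    (isOpenEmbedding_stereographic_symm hv).comp b.repr.symm.toHomeomorph.isOpenEmbedding
  have hg0 : g 0 = x := by
    have h1 := stereographic_neg_apply x
    have h2 := (stereographic hv).left_inv (x := x) (by
      simp only [stereographic_source, Set.mem_compl_iff, Set.mem_singleton_iff]
      intro h
      have h := congrArg Subtype.val h
      have h : (x : EuclideanSpace ℝ (Fin (n+1))) = -(x : EuclideanSpace ℝ (Fin (n+1))) := h
      have h3 : (2 : ℝ) • (x : EuclideanSpace ℝ (Fin (n+1))) = 0 := by
        rw [two_smul]; nth_rewrite 1 [h]; simp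
      have : (x : EuclideanSpace ℝ (Fin (n+1))) = 0 := by simpa using h3
      exact ne_zero_of_mem_unit_sphere x this)
    rw [h1] at h2
    simp only [g, map_zero]
    exact h2
  have hc : ContDiff ℝ 1 (fun w => ((g w : Sph n) : EuclideanSpace ℝ (Fin (n+1)))) := by
    have h1 : ContDiff ℝ 1 (stereoInvFunAux ((-x : Sph n) : EuclideanSpace ℝ (Fin (n+1)))) :=
      contDiff_stereoInvFunAux
    have h2 : ContDiff ℝ 1 (fun w => ((b.repr.symm w : _) : EuclideanSpace ℝ (Fin (n+1)))) :=
      (Submodule.subtypeL _).contDiff.comp b.repr.symm.contDiff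
    exact h1.comp h2
  obtain ⟨K, t, ht, hK⟩ := (hc.contDiffAt (x := 0)).exists_lipschitzOnWith
  have hK' : LipschitzOnWith K g t := hK
  obtain ⟨ρ, hρ, hρt⟩ := Metric.mem_nhds_iff.mp ht
  have hK2 := hK'.mono hρt
  refine ⟨g '' Metric.ball 0 ρ, ?_, ?_⟩
  · rw [← hg0]; exact hg.isOpenMap.image_mem_nhds (Metric.ball_mem_nhds _ hρ)
  · refine (hK2.hausdorffMeasure_image_le (Nat.cast_nonneg n)).trans_lt ?_
    exact ENNReal.mul_lt_top (by finiteness) measure_ball_lt_top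

theorem sph_fin (n : ℕ) : IsFiniteMeasure (μH[(n : ℝ)] : Measure (Sph n)) := by
  have := sph_locfin n
  exact ⟨isCompact_univ.measure_lt_top⟩

theorem sph_low (n : ℕ) : ∃ c : ℝ, 0 < c ∧ ∀ (x : Sph n) (r : ℝ), 0 < r → r ≤ 1 →
    c * r ^ n ≤ (μH[(n : ℝ)] : Measure (Sph n)).real (Metric.ball x r) := by
  have : Fact (Module.finrank ℝ (EuclideanSpace ℝ (Fin (n + 1))) = n + 1) := ⟨by simp⟩
  have := haar_aux n
  have := sph_fin n
  let μ : Measure (EuclideanSpace ℝ (Fin n)) := μH[(n : ℝ)]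
  refine ⟨μ.real (Metric.ball 0 1) / 2 ^ n, ?_, ?_⟩
  · have : 0 < μ.real (Metric.ball 0 1) := 
      ENNReal.toReal_pos (Metric.measure_ball_pos _ _ one_pos).ne' measure_ball_lt_top.ne
    positivity
  intro x r hr hr1
  have hx : ‖(x : EuclideanSpace ℝ (Fin (n+1)))‖ = 1 := norm_eq_of_mem_sphere x
  let b := OrthonormalBasis.fromOrthogonalSpanSingleton (𝕜 := ℝ) n (ne_zero_of_mem_unit_sphere x)
  let U := (Submodule.span ℝ {(x : EuclideanSpace ℝ (Fin (n+1)))})ᗮ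
  let P : Sph n → EuclideanSpace ℝ (Fin n) := fun y => b.repr (U.orthogonalProjectionOnto y)
  have hP : LipschitzWith 1 P := by
    have h := (b.repr.lipschitz.comp U.lipschitzWith_orthogonalProjectionOnto).comp
      (LipschitzWith.subtype_val (Metric.sphere (0 : EuclideanSpace ℝ (Fin (n + 1))) 1))
    rw [one_mul, one_mul] at h
    exact h
  have hsub : Metric.ball 0 (r/2) ⊆ P '' Metric.ball x r := by
    intro w hw
    let v : U := b.repr.symm w
    have hvn : ‖(v : EuclideanSpace ℝ (Fin (n+1)))‖ < r / 2 := by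
      have : ‖v‖ = ‖w‖ := b.repr.symm.norm_map w
      rw [Submodule.coe_norm] at this
      rw [this]; simpa using hw
    have hin : inner ℝ (v : EuclideanSpace ℝ (Fin (n+1))) (x : EuclideanSpace ℝ (Fin (n+1))) = 0 :=
      Submodule.mem_orthogonal_singleton_iff_inner_left.mp v.2
    have hnn := norm_nonneg (v : EuclideanSpace ℝ (Fin (n+1)))
    set q := ‖(v : EuclideanSpace ℝ (Fin (n+1)))‖ with hq
    have hq1 : 0 ≤ 1 - q ^ 2 := by nlinarith
    have ha2 : (√(1 - q^2)) ^ 2 = 1 - q^2 := Real.sq_sqrt hq1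
    have ha0 : 0 ≤ √(1 - q^2) := Real.sqrt_nonneg _
    set a := √(1 - q^2) with ha
    have hnorm : ∀ t : ℝ, ‖(v : EuclideanSpace ℝ (Fin (n+1))) + t • (x : EuclideanSpace ℝ (Fin (n+1)))‖ ^ 2 = q ^ 2 + t ^ 2 := by
      intro t
      rw [norm_add_sq_real, inner_smul_right, hin, norm_smul, hx, ← hq]
      simp
    refine ⟨⟨(v : EuclideanSpace ℝ (Fin (n+1))) + a • (x : EuclideanSpace ℝ (Fin (n+1))), ?_⟩, ?_, ?_⟩
    · rw [mem_sphere_zero_iff_norm]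
      have := hnorm a
      rw [ha2] at this
      rw [← sq_eq_sq₀ (norm_nonneg _) zero_le_one, this]; ring
    · rw [Metric.mem_ball, Subtype.dist_eq, dist_eq_norm]
      have := hnorm (a - 1)
      rw [sub_smul, one_smul, ← add_sub_assoc] at this
      refine lt_of_pow_lt_pow_left₀ 2 hr.le ?_
      rw [this]
      have : a ≤ 1 := by nlinarith
      nlinarith
    · simp only [P, map_add, map_smul]
      have h₁ : U.orthogonalProjectionOnto (x : EuclideanSpace ℝ (Fin (n+1))) = 0 :=
        Submodule.orthogonalProjectionOnto_orthogonalComplement_singleton_eq_zero _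
      rw [h₁, Submodule.orthogonalProjectionOnto_mem_subspace_eq_self]
      simp [v]
  have h1 := hP.hausdorffMeasure_image_le (Nat.cast_nonneg n) (Metric.ball x r)
  have h2 := (measure_mono hsub).trans h1
  simp only [ENNReal.coe_one, ENNReal.one_rpow, one_mul] at h2
  rw [Measure.addHaar_ball_of_pos _ _ (by positivity : 0 < r/2)] at h2
  have h3 := ENNReal.toReal_mono (measure_ne_top _ _) h2
  rw [ENNReal.toReal_mul, ENNReal.toReal_ofReal (by positivity)] at h3
  simp only [finrank_euclideanSpace, Fintype.card_fin] at h3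
  refine le_trans (le_of_eq ?_) h3
  simp only [Measure.real, μ, div_pow]
  ring

/-- tent weight -/
def tent {n : ℕ} (l : ℝ) (x y : Sph n) : ℝ := max 0 (1 - l * dist x y)

theorem tent_nonneg {n : ℕ} (l : ℝ) (x y : Sph n) : 0 ≤ tent l x y := le_max_left _ _

theorem tent_le_one {n : ℕ} {l : ℝ} (hl : 0 ≤ l) (x y : Sph n) : tent l x y ≤ 1 := by
  have := mul_nonneg hl (dist_nonneg (x := x) (y := y))
  exact max_le zero_le_one (by linarith)

theorem tent_cont {n : ℕ} : Continuous (fun q : (ℝ × Sph n) × Sph n => tent q.1.1 q.1.2 q.2) := by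
  unfold tent
  fun_prop

theorem tent_cont' {n : ℕ} (l : ℝ) (x : Sph n) : Continuous (fun y => tent l x y) := by
  unfold tent
  fun_prop

theorem integ_of_cont {n : ℕ} {E : Type*} [NormedAddCommGroup E] {f : Sph n → E}
    (hf : Continuous f) : Integrable f (μH[(n : ℝ)] : Measure (Sph n)) := by
  have := sph_fin n
  exact hf.integrable_of_hasCompactSupport (HasCompactSupport.of_compactSpace f)

/-- weighted average (not normalised) -/
def tavg {n m : ℕ} (u : Sph n → Sph m) (l : ℝ) (x : Sph n) : EuclideanSpace ℝ (Fin (m + 1)) :=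
  ∫ y, tent l x y • (u y : EuclideanSpace ℝ (Fin (m + 1))) ∂(μH[(n : ℝ)] : Measure (Sph n))

theorem tavg_cont {n m : ℕ} {u : Sph n → Sph m} (hu : Continuous u) :
    Continuous (fun q : ℝ × Sph n => tavg u q.1 q.2) := by
  have := sph_fin n
  have h : Continuous (Function.uncurry fun (q : ℝ × Sph n) (y : Sph n) =>
      tent q.1 q.2 y • (u y : EuclideanSpace ℝ (Fin (m + 1)))) := by
    have h1 := tent_cont (n := n)
    have h2 : Continuous (fun q : (ℝ × Sph n) × Sph n => (u q.2 : EuclideanSpace ℝ (Fin (m + 1)))) := by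
      fun_prop
    exact h1.smul h2
  have := continuous_parametric_integral_of_continuous (μ := (μH[(n : ℝ)] : Measure (Sph n)))
    h isCompact_univ
  simpa [tavg] using this

theorem tent_int_low {n : ℕ} {c : ℝ} (hc : ∀ (x : Sph n) (r : ℝ), 0 < r → r ≤ 1 →
    c * r ^ n ≤ (μH[(n : ℝ)] : Measure (Sph n)).real (Metric.ball x r))
    {l r : ℝ} (hl : 0 ≤ l) (hr : 0 < r) (hr1 : r ≤ 1) (hlr : l * r ≤ 1) (x : Sph n) :
    c * (r / 2) ^ n / 2 ≤ ∫ y, tent l x y ∂(μH[(n : ℝ)] : Measure (Sph n)) := by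
  have := sph_fin n
  have h1 := hc x (r / 2) (by positivity) (by linarith)
  have h2 : ∫ y, (Metric.ball x (r / 2)).indicator (fun _ => (1 / 2 : ℝ)) y
      ∂(μH[(n : ℝ)] : Measure (Sph n)) ≤ ∫ y, tent l x y ∂(μH[(n : ℝ)] : Measure (Sph n)) := by
    apply integral_mono
    · exact (integrable_const _).indicator measurableSet_ball
    · exact integ_of_cont (tent_cont' l x)
    · intro y
      by_cases hy : y ∈ Metric.ball x (r / 2)
      · simp only [Set.indicator_of_mem hy]
        rw [Metric.mem_ball, dist_comm] at hy
        have := mul_le_mul_of_nonneg_left hy.le hl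
        exact le_max_of_le_right (by linarith)
      · simp only [Set.indicator_of_notMem hy]
        exact tent_nonneg l x y
  rw [integral_indicator measurableSet_ball, setIntegral_const, smul_eq_mul] at h2
  linarith

theorem key_real {d p : ℝ} (hd : 0 ≤ d) (hp : 1 ≤ p) : d ≤ 1 / 2 + 2 ^ p / 2 * d ^ p := by
  rcases le_total d (1 / 2) with h | h
  · have : 0 ≤ (2 : ℝ) ^ p / 2 * d ^ p := by positivity
    linarith
  · have h1 : (2 * d) ^ (1 : ℝ) ≤ (2 * d) ^ p := Real.rpow_le_rpow_of_exponent_le (by linarith) hp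
    rw [Real.rpow_one, Real.mul_rpow (by norm_num) hd] at h1
    linarith

theorem tavg_step {n m : ℕ} {u : Sph n → Sph m} (hu : Continuous u) {p : ℝ} (hp : 1 ≤ p)
    {l : ℝ} (x : Sph n) (h0 : tavg u l x = 0) (y : Sph n) :
    ∫ z, tent l x z ∂(μH[(n : ℝ)] : Measure (Sph n)) ≤
      2 ^ p * ∫ z, tent l x z * ‖(u y : EuclideanSpace ℝ (Fin (m + 1))) - u z‖ ^ p
        ∂(μH[(n : ℝ)] : Measure (Sph n)) := by
  have hd : Continuous (fun z => ‖(u y : EuclideanSpace ℝ (Fin (m + 1))) - u z‖) := by fun_prop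
  have hw := tent_cont' l x
  have hdp : Continuous (fun z => ‖(u y : EuclideanSpace ℝ (Fin (m + 1))) - u z‖ ^ p) :=
    hd.rpow_const (fun _ => Or.inr (by linarith))
  have hW0 : 0 ≤ ∫ z, tent l x z ∂(μH[(n : ℝ)] : Measure (Sph n)) :=
    integral_nonneg (fun z => tent_nonneg l x z)
  have hun : Continuous (fun z => (u z : EuclideanSpace ℝ (Fin (m + 1)))) := by fun_prop
  have e1 : ∫ z, tent l x z • ((u y : EuclideanSpace ℝ (Fin (m + 1))) - u z)
      ∂(μH[(n : ℝ)] : Measure (Sph n)) =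
      (∫ z, tent l x z ∂(μH[(n : ℝ)] : Measure (Sph n))) • (u y : EuclideanSpace ℝ (Fin (m + 1))) := by
    simp only [smul_sub]
    have i1 : Integrable (fun z => tent l x z • (u y : EuclideanSpace ℝ (Fin (m + 1)))) (μH[(n : ℝ)] : Measure (Sph n)) :=
      integ_of_cont (hw.smul continuous_const)
    have i2 : Integrable (fun z => tent l x z • (u z : EuclideanSpace ℝ (Fin (m + 1)))) (μH[(n : ℝ)] : Measure (Sph n)) :=
      integ_of_cont (hw.smul hun)
    rw [integral_sub i1 i2,
      integral_smul_const]
    change _ - tavg u l x = _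
    rw [h0, sub_zero]
  have e2 : ∫ z, tent l x z ∂(μH[(n : ℝ)] : Measure (Sph n)) ≤
      ∫ z, tent l x z * ‖(u y : EuclideanSpace ℝ (Fin (m + 1))) - u z‖
        ∂(μH[(n : ℝ)] : Measure (Sph n)) := by
    have := norm_integral_le_integral_norm (μ := (μH[(n : ℝ)] : Measure (Sph n)))
      (fun z => tent l x z • ((u y : EuclideanSpace ℝ (Fin (m + 1))) - u z))
    rw [e1, norm_smul, norm_eq_of_mem_sphere (u y), mul_one, Real.norm_of_nonneg hW0] at this
    refine this.trans (le_of_eq ?_)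
    congr 1
    ext z
    rw [norm_smul, Real.norm_of_nonneg (tent_nonneg l x z)]
  have i3 : Integrable (fun z => (1 / 2) * tent l x z) (μH[(n : ℝ)] : Measure (Sph n)) :=
    integ_of_cont (continuous_const.mul hw)
  have i4 : Integrable (fun z => 2 ^ p / 2 * (tent l x z * ‖(u y : EuclideanSpace ℝ (Fin (m + 1))) - u z‖ ^ p)) (μH[(n : ℝ)] : Measure (Sph n)) :=
    integ_of_cont (continuous_const.mul (hw.mul hdp))
  have e3 : ∫ z, tent l x z * ‖(u y : EuclideanSpace ℝ (Fin (m + 1))) - u z‖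
        ∂(μH[(n : ℝ)] : Measure (Sph n)) ≤
      ∫ z, ((1 / 2) * tent l x z + 2 ^ p / 2 *
        (tent l x z * ‖(u y : EuclideanSpace ℝ (Fin (m + 1))) - u z‖ ^ p))
        ∂(μH[(n : ℝ)] : Measure (Sph n)) := by
    apply integral_mono (integ_of_cont (hw.mul hd))
      (i3.add i4)
    intro z
    dsimp only [Pi.add_apply, Pi.mul_apply]
    have := mul_le_mul_of_nonneg_left (key_real
      (norm_nonneg ((u y : EuclideanSpace ℝ (Fin (m + 1))) - u z)) hp) (tent_nonneg l x z)
    refine this.trans (le_of_eq ?_)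
    ring
  rw [integral_add i3 i4, integral_const_mul, integral_const_mul] at e3
  linarith

theorem tent_supp {n : ℕ} {l r : ℝ} (hr : ∀ d : ℝ, 0 ≤ d → d ≤ 2 → l * d < 1 → d ≤ 2 * r)
    {x y : Sph n} (h : tent l x y ≠ 0) : dist x y ≤ 2 * r := by
  apply hr _ dist_nonneg
  · rw [Subtype.dist_eq]
    refine (dist_le_norm_add_norm _ _).trans ?_
    rw [norm_eq_of_mem_sphere x, norm_eq_of_mem_sphere y]; norm_num
  · by_contra hc
    apply h
    unfold tent
    rw [max_eq_left]; linarith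

theorem pointwise_bound {n m : ℕ} {u : Sph n → Sph m} {p : ℝ} (hp : 1 ≤ p)
    {l r : ℝ} (hl : 0 ≤ l) (hr0 : 0 < r)
    (hr : ∀ d : ℝ, 0 ≤ d → d ≤ 2 → l * d < 1 → d ≤ 2 * r) (x y z : Sph n) :
    tent l x y * (tent l x z * ‖(u y : EuclideanSpace ℝ (Fin (m + 1))) - u z‖ ^ p) ≤
      (4 * r) ^ (2 * (n : ℝ)) * (‖(u y : EuclideanSpace ℝ (Fin (m + 1))) - u z‖ ^ p /
        dist y z ^ (2 * (n : ℝ))) := by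
  have hR : 0 ≤ (4 * r) ^ (2 * (n : ℝ)) * (‖(u y : EuclideanSpace ℝ (Fin (m + 1))) - u z‖ ^ p /
        dist y z ^ (2 * (n : ℝ))) := by positivity
  by_cases hy : tent l x y = 0
  · rw [hy, zero_mul]; exact hR
  by_cases hz : tent l x z = 0
  · rw [hz, zero_mul, mul_zero]; exact hR
  by_cases hyz : y = z
  · subst hyz
    have : (0 : ℝ) ^ p = 0 := Real.zero_rpow (by linarith)
    simp [this]
  have hD : 0 < dist y z := dist_pos.mpr hyz
  have h1 := tent_supp hr hy
  have h2 := tent_supp hr hz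
  have h3 : dist y z ≤ 4 * r := by
    have := dist_triangle_left y z x
    linarith
  have h4 : dist y z ^ (2 * (n : ℝ)) ≤ (4 * r) ^ (2 * (n : ℝ)) :=
    Real.rpow_le_rpow hD.le h3 (by positivity)
  have h5 : 0 < dist y z ^ (2 * (n : ℝ)) := Real.rpow_pos_of_pos hD _
  have h6 : 0 ≤ ‖(u y : EuclideanSpace ℝ (Fin (m + 1))) - u z‖ ^ p := by positivity
  have h7 : tent l x y * (tent l x z * ‖(u y : EuclideanSpace ℝ (Fin (m + 1))) - u z‖ ^ p) ≤
      ‖(u y : EuclideanSpace ℝ (Fin (m + 1))) - u z‖ ^ p := by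
    have a1 := tent_le_one hl x y
    have a2 := tent_le_one hl x z
    have a3 := tent_nonneg l x z
    calc _ ≤ 1 * (1 * ‖(u y : EuclideanSpace ℝ (Fin (m + 1))) - u z‖ ^ p) := by gcongr
      _ = _ := by ring
  refine h7.trans ?_
  rw [mul_div_assoc', le_div_iff₀ h5, mul_comm]
  gcongr

theorem energy_low {n m : ℕ} {u : Sph n → Sph m} (hu : Continuous u) {s : ℝ}
    (hp : 1 ≤ (n : ℝ) / s) {l r : ℝ} (hl : 0 ≤ l) (hr0 : 0 < r)
    (hr : ∀ d : ℝ, 0 ≤ d → d ≤ 2 → l * d < 1 → d ≤ 2 * r) (x : Sph n) (h0 : tavg u l x = 0) :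
    ENNReal.ofReal ((∫ z, tent l x z ∂(μH[(n : ℝ)] : Measure (Sph n))) ^ 2) ≤
      ENNReal.ofReal (2 ^ ((n : ℝ) / s) * (4 * r) ^ (2 * (n : ℝ))) * sphEnergy n m s u := by
  set p := (n : ℝ) / s with hpdef
  set μ := (μH[(n : ℝ)] : Measure (Sph n)) with hμ
  set W := ∫ z, tent l x z ∂μ with hW
  have hW0 : 0 ≤ W := integral_nonneg (fun z => tent_nonneg l x z)
  have hWl : ENNReal.ofReal W = ∫⁻ y, ENNReal.ofReal (tent l x y) ∂μ :=
    ofReal_integral_eq_lintegral_ofReal (integ_of_cont (tent_cont' l x))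
      (Filter.Eventually.of_forall fun z => tent_nonneg l x z)
  have hstep : ∀ y, ENNReal.ofReal W ≤ ENNReal.ofReal (2 ^ p) * ∫⁻ z, ENNReal.ofReal
      (tent l x z * ‖(u y : EuclideanSpace ℝ (Fin (m + 1))) - u z‖ ^ p) ∂μ := by
    intro y
    have hd : Continuous (fun z => ‖(u y : EuclideanSpace ℝ (Fin (m + 1))) - u z‖) := by fun_prop
    have hdp : Continuous (fun z => ‖(u y : EuclideanSpace ℝ (Fin (m + 1))) - u z‖ ^ p) :=
      hd.rpow_const (fun _ => Or.inr (by linarith))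
    have i1 : Integrable (fun z => tent l x z * ‖(u y : EuclideanSpace ℝ (Fin (m + 1))) - u z‖ ^ p) μ :=
      integ_of_cont ((tent_cont' l x).mul hdp)
    rw [← ofReal_integral_eq_lintegral_ofReal i1
      (Filter.Eventually.of_forall fun z => mul_nonneg (tent_nonneg l x z) (by positivity)),
      ← ENNReal.ofReal_mul (by positivity)]
    exact ENNReal.ofReal_le_ofReal (tavg_step hu hp x h0 y)
  rw [sq, ENNReal.ofReal_mul hW0]
  nth_rewrite 1 [hWl]
  rw [← lintegral_mul_const' _ _ ENNReal.ofReal_ne_top]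
  unfold sphEnergy
  rw [← lintegral_const_mul' _ _ ENNReal.ofReal_ne_top]
  apply lintegral_mono
  intro y
  calc ENNReal.ofReal (tent l x y) * ENNReal.ofReal W
      ≤ ENNReal.ofReal (tent l x y) * (ENNReal.ofReal (2 ^ p) * ∫⁻ z, ENNReal.ofReal
      (tent l x z * ‖(u y : EuclideanSpace ℝ (Fin (m + 1))) - u z‖ ^ p) ∂μ) := by
        gcongr; exact hstep y
    _ = ∫⁻ z, ENNReal.ofReal (tent l x y) * ENNReal.ofReal (2 ^ p) * ENNReal.ofReal
      (tent l x z * ‖(u y : EuclideanSpace ℝ (Fin (m + 1))) - u z‖ ^ p) ∂μ := by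
        rw [← mul_assoc, lintegral_const_mul' _ _ (by finiteness)]
    _ ≤ ∫⁻ z, ENNReal.ofReal (2 ^ p * (4 * r) ^ (2 * (n : ℝ))) * ENNReal.ofReal
        (‖(u y : EuclideanSpace ℝ (Fin (m + 1))) - u z‖ ^ p / dist y z ^ (2 * (n : ℝ))) ∂μ := by
        apply lintegral_mono
        intro z
        dsimp only
        rw [← ENNReal.ofReal_mul (tent_nonneg l x y), ← ENNReal.ofReal_mul
          (mul_nonneg (tent_nonneg l x y) (by positivity)), ← ENNReal.ofReal_mul (by positivity)]
        apply ENNReal.ofReal_le_ofReal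
        have h1 := pointwise_bound (u := u) hp hl hr0 hr x y z
        have h2 : (0 : ℝ) ≤ 2 ^ p := by positivity
        have h3 := mul_le_mul_of_nonneg_left h1 h2
        calc _ = _ := by ring
          _ ≤ _ := h3
          _ = _ := by ring
    _ = _ := by rw [lintegral_const_mul' _ _ ENNReal.ofReal_ne_top]

theorem tavg_ne_zero {n m : ℕ} {s c : ℝ} (hc0 : 0 < c)
    (hc : ∀ (x : Sph n) (r : ℝ), 0 < r → r ≤ 1 →
    c * r ^ n ≤ (μH[(n : ℝ)] : Measure (Sph n)).real (Metric.ball x r))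
    (hp : 1 ≤ (n : ℝ) / s) {u : Sph n → Sph m} (hu : Continuous u)
    (hE : sphEnergy n m s u < ENNReal.ofReal (c ^ 2 / (4 * 4 ^ n * 16 ^ n * 2 ^ ((n : ℝ) / s))))
    {l : ℝ} (hl : 0 ≤ l) (x : Sph n) : tavg u l x ≠ 0 := by
  intro h0
  obtain ⟨r, hr0, hr1, hlr, hr⟩ : ∃ r : ℝ, 0 < r ∧ r ≤ 1 ∧ l * r ≤ 1 ∧
      ∀ d : ℝ, 0 ≤ d → d ≤ 2 → l * d < 1 → d ≤ 2 * r := by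
    rcases le_total l 1 with h | h
    · exact ⟨1, one_pos, le_rfl, by linarith, fun d _ h2 _ => by linarith⟩
    · have hl0 : 0 < l := by linarith
      refine ⟨l⁻¹, by positivity, inv_le_one_of_one_le₀ h, (mul_inv_cancel₀ hl0.ne').le, ?_⟩
      intro d h1 h2 h3
      have h4 : d ≤ l⁻¹ := by
        rw [← one_div, le_div_iff₀ hl0]; linarith
      have : 0 < l⁻¹ := by positivity
      linarith
  have h1 := energy_low hu hp hl hr0 hr x h0
  have h2 := tent_int_low hc hl hr0 hr1 hlr x
  have hpw : (4 * r) ^ (2 * (n : ℝ)) = 16 ^ n * (r ^ n) ^ 2 := by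
    rw [Real.rpow_mul (by positivity), Real.rpow_natCast, Real.rpow_two, mul_pow, mul_pow,
      ← pow_mul r, ← pow_mul r, mul_comm 2 n]
    norm_num
  rw [hpw] at h1
  have hK : 0 < (2 : ℝ) ^ ((n : ℝ) / s) * (16 ^ n * (r ^ n) ^ 2) := by positivity
  have h3 : ENNReal.ofReal (2 ^ ((n : ℝ) / s) * (16 ^ n * (r ^ n) ^ 2)) * sphEnergy n m s u <
      ENNReal.ofReal (2 ^ ((n : ℝ) / s) * (16 ^ n * (r ^ n) ^ 2)) *
      ENNReal.ofReal (c ^ 2 / (4 * 4 ^ n * 16 ^ n * 2 ^ ((n : ℝ) / s))) :=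
    ENNReal.mul_lt_mul_right (by simpa using hK) ENNReal.ofReal_ne_top hE
  have h4 := h1.trans_lt h3
  rw [← ENNReal.ofReal_mul hK.le] at h4
  have h5 := (ENNReal.ofReal_lt_ofReal_iff_of_nonneg (by positivity)).mp h4
  have h6 : (c * (r / 2) ^ n / 2) ^ 2 ≤ (∫ y, tent l x y ∂(μH[(n : ℝ)] : Measure (Sph n))) ^ 2 :=
    pow_le_pow_left₀ (by positivity) h2 2
  have h7 : 2 ^ ((n : ℝ) / s) * (16 ^ n * (r ^ n) ^ 2) *
      (c ^ 2 / (4 * 4 ^ n * 16 ^ n * 2 ^ ((n : ℝ) / s))) = (c * (r / 2) ^ n / 2) ^ 2 := by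
    have : (4 : ℝ) ^ n = (2 ^ n) ^ 2 := by rw [← pow_mul, mul_comm, pow_mul]; norm_num
    rw [this, div_pow r]
    have : (0 : ℝ) < 2 ^ ((n : ℝ) / s) := by positivity
    field_simp
    try norm_num
  linarith

theorem tavg_inner {n m : ℕ} {c : ℝ} (hc0 : 0 < c)
    (hc : ∀ (x : Sph n) (r : ℝ), 0 < r → r ≤ 1 →
    c * r ^ n ≤ (μH[(n : ℝ)] : Measure (Sph n)).real (Metric.ball x r))
    {u : Sph n → Sph m} (hu : Continuous u) : ∃ l : ℝ, 0 < l ∧ ∀ x,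
      0 < inner ℝ (u x : EuclideanSpace ℝ (Fin (m + 1))) (tavg u l x) := by
  have huc := CompactSpace.uniformContinuous_of_continuous hu
  obtain ⟨δ, hδ, hd⟩ := Metric.uniformContinuous_iff.mp huc 1 one_pos
  refine ⟨max 1 δ⁻¹, by positivity, fun x => ?_⟩
  set l := max 1 δ⁻¹ with hl
  have hl1 : 1 ≤ l := le_max_left _ _
  have hl0 : 0 < l := by linarith
  have hlow := tent_int_low hc hl0.le (inv_pos.mpr hl0) (inv_le_one_of_one_le₀ hl1)
    (mul_inv_cancel₀ hl0.ne').le x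
  have hW : 0 < ∫ y, tent l x y ∂(μH[(n : ℝ)] : Measure (Sph n)) :=
    lt_of_lt_of_le (by positivity) hlow
  have hun : Continuous (fun z => (u z : EuclideanSpace ℝ (Fin (m + 1)))) := by fun_prop
  have hw := tent_cont' l x
  unfold tavg
  have i1 : Integrable (fun z => tent l x z • (u z : EuclideanSpace ℝ (Fin (m + 1)))) (μH[(n : ℝ)] : Measure (Sph n)) :=
    integ_of_cont (hw.smul hun)
  rw [← integral_inner i1]
  have : ∫ y, (1 / 2) * tent l x y ∂(μH[(n : ℝ)] : Measure (Sph n)) ≤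
      ∫ y, inner ℝ (u x : EuclideanSpace ℝ (Fin (m + 1)))
        (tent l x y • (u y : EuclideanSpace ℝ (Fin (m + 1)))) ∂(μH[(n : ℝ)] : Measure (Sph n)) := by
    apply integral_mono (integ_of_cont (continuous_const.mul hw))
      (integ_of_cont (continuous_const.inner (hw.smul hun)))
    intro y
    dsimp only [Pi.mul_apply, Pi.smul_apply']
    rw [inner_smul_right, mul_comm]
    by_cases hy : tent l x y = 0
    · rw [hy, zero_mul, zero_mul]
    apply mul_le_mul_of_nonneg_left _ (tent_nonneg l x y)
    have h1 : l * dist x y < 1 := by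
      by_contra hcon
      apply hy
      unfold tent
      rw [max_eq_left]; linarith
    have h2 : dist x y < δ := by
      have h3 : δ⁻¹ * dist x y ≤ l * dist x y :=
        mul_le_mul_of_nonneg_right (le_max_right _ _) dist_nonneg
      have h4 : δ⁻¹ * dist x y < 1 := h3.trans_lt h1
      rwa [inv_mul_lt_iff₀ hδ, mul_one] at h4
    have h5 := hd h2
    rw [Subtype.dist_eq, dist_eq_norm] at h5
    have h6 := norm_sub_sq_real (u x : EuclideanSpace ℝ (Fin (m + 1))) (u y)
    rw [norm_eq_of_mem_sphere (u x), norm_eq_of_mem_sphere (u y)] at h6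
    have h7 := norm_nonneg ((u x : EuclideanSpace ℝ (Fin (m + 1))) - u y)
    nlinarith
  rw [integral_const_mul] at this
  linarith

/-- continuous maps `𝕊ⁿ → 𝕊^m` of sufficiently small `E_{s,n/s}`-energy are
homotopic to a constant map. -/
theorem stmt10 (n m : ℕ) (hn : 1 ≤ n) (hm : 1 ≤ m) (s : ℝ) (hs : 0 < s) (hs1 : s < 1) :
    ∃ ε : ℝ, 0 < ε ∧
      ∀ u : Sph n → Sph m, Continuous u →
        sphEnergy n m s u < ENNReal.ofReal ε →
        ∃ c : Sph m, Homotopic u (fun _ => c) := by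
  obtain ⟨c, hc0, hc⟩ := sph_low n
  have hp : 1 ≤ (n : ℝ) / s := by
    rw [le_div_iff₀ hs]
    have : (1 : ℝ) ≤ n := by exact_mod_cast hn
    linarith
  refine ⟨c ^ 2 / (4 * 4 ^ n * 16 ^ n * 2 ^ ((n : ℝ) / s)), by positivity, ?_⟩
  intro u hu hE
  have hne := fun (l : ℝ) (hl : 0 ≤ l) (x : Sph n) => tavg_ne_zero hc0 hc hp hu hE hl x
  obtain ⟨L, hL, hin⟩ := tavg_inner hc0 hc hu
  let a : unitInterval → ℝ := fun t => min 1 (2 * (t : ℝ))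
  let b : unitInterval → ℝ := fun t => min 1 (2 - 2 * (t : ℝ))
  have hac : Continuous a := by fun_prop
  have hbc : Continuous b := by fun_prop
  let G : unitInterval × Sph n → EuclideanSpace ℝ (Fin (m + 1)) := fun q =>
    (1 - a q.1) • (u q.2 : EuclideanSpace ℝ (Fin (m + 1))) + a q.1 • tavg u (L * b q.1) q.2
  have hGc : Continuous G := by
    have h1 : Continuous (fun q : unitInterval × Sph n => tavg u (L * b q.1) q.2) :=
      (tavg_cont hu).comp (f := fun q : unitInterval × Sph n => (L * b q.1, q.2)) (by fun_prop)
    have h2 : Continuous (fun q : unitInterval × Sph n =>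
      (u q.2 : EuclideanSpace ℝ (Fin (m + 1)))) := by fun_prop
    have h3 : Continuous (fun q : unitInterval × Sph n => a q.1) := hac.comp continuous_fst
    exact ((continuous_const.sub h3).smul h2).add (h3.smul h1)
  have hG0 : ∀ q, G q ≠ 0 := by
    rintro ⟨t, x⟩ h
    simp only [G] at h
    have ht0 : 0 ≤ (t : ℝ) := t.2.1
    have ht1 : (t : ℝ) ≤ 1 := t.2.2
    rcases le_total (t : ℝ) (1 / 2) with ht | ht
    · have hb : b t = 1 := min_eq_left (by linarith)
      have ha : a t = 2 * (t : ℝ) := min_eq_right (by linarith)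
      rw [hb, ha, mul_one] at h
      have h1 := congrArg (fun v => inner ℝ (u x : EuclideanSpace ℝ (Fin (m + 1))) v) h
      simp only [inner_add_right, inner_smul_right, inner_zero_right, real_inner_self_eq_norm_sq,
        norm_eq_of_mem_sphere (u x)] at h1
      have h2 := hin x
      rcases ht.lt_or_eq with h3 | h3
      · have := mul_nonneg (by linarith : 0 ≤ 2 * (t : ℝ)) h2.le
        linarith
      · rw [h3] at h1
        linarith
    · have ha : a t = 1 := min_eq_left (by linarith)
      have hb : 0 ≤ b t := le_min zero_le_one (by linarith)
      rw [ha] at h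
      simp only [sub_self, zero_smul, one_smul, zero_add] at h
      exact hne _ (mul_nonneg hL.le hb) x h
  let H : unitInterval × Sph n → Sph m := fun q => ⟨‖G q‖⁻¹ • G q, by
    rw [mem_sphere_zero_iff_norm, norm_smul, norm_inv, norm_norm,
      inv_mul_cancel₀ (norm_ne_zero_iff.mpr (hG0 q))]⟩
  have hHc : Continuous H := Continuous.subtype_mk
    ((hGc.norm.inv₀ (fun q => norm_ne_zero_iff.mpr (hG0 q))).smul hGc) _
  obtain ⟨x0⟩ : Nonempty (Sph n) := ⟨⟨EuclideanSpace.single 0 1, by simp⟩⟩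
  refine ⟨H (1, x0), H, hHc, ?_, ?_⟩
  · intro x
    apply Subtype.ext
    have : G (0, x) = u x := by simp [G, a]
    simp only [H, this, norm_eq_of_mem_sphere (u x), inv_one, one_smul]
  · intro x
    have : G (1, x) = G (1, x0) := by simp [G, a, b, tavg, tent]
    apply Subtype.ext
    simp only [H, this]
end
end
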